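/- Let v⁺, v⁻ : ℝ² → ℝ be three times continuously differentiable (ContDiff ℝ 3), fix (x,y) ∈ ℝ², and for each h > 0 let η_h ∈ [y−h, y] (the vertical intersection ordinate of the interface with the grid line). Define the jumps at (x, η_h) by [v] = v⁺(x,η_h) − v⁻(x,η_h), [v_y] = ∂_y v⁺(x,η_h) − ∂_y v⁻(x,η_h), [v_yy] = ∂_yy v⁺(x,η_h) − ∂_yy v⁻(x,η_h). Define the vertical truncation error at the interior node, E_h = (v⁻(x,y+h) + v⁺(x,y−h) − 2·v⁻(x,y))/h² − ∂_yy v⁻(x,y), and the correction C_h⁻ = (1/h²)·([v] + [v_y]·(y−h−η_h) + (1/2)·[v_yy]·(y−h−η_h)²). Then there exist constants C > 0 and δ > 0 such that for all 0 < h < δ and any choice of η_h ∈ [y−h, y], |E_h − C_h⁻| ≤ C·h. -/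

import Mathlib

lemma kfbi_taylor (f : ℝ → ℝ) (hf : ContDiff ℝ 3 f) (y : ℝ) :
    ∃ M : ℝ, 0 ≤ M ∧ ∀ a ∈ Set.Icc (y - 1) (y + 1), ∀ b ∈ Set.Icc (y - 1) (y + 1),
      |f b - (f a + deriv f a * (b - a) + (1 / 2) * iteratedDeriv 2 f a * (b - a) ^ 2)|
        ≤ M * |b - a| ^ 3 := by
  have hc : ContinuousOn (iteratedDeriv 3 f) (Set.Icc (y - 1) (y + 1)) :=
    (hf.continuous_iteratedDeriv 3 le_rfl).continuousOn
  obtain ⟨M, hM⟩ := isCompact_Icc.exists_bound_of_continuousOn hc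
  refine ⟨|M|, abs_nonneg M, fun a ha b hb => ?_⟩
  by_cases hab : a = b
  · subst hab; simp
  have hu : UniqueDiffOn ℝ (Set.uIcc a b) := uniqueDiffOn_Icc (by grind)
  have hsub : Set.uIcc a b ⊆ Set.Icc (y - 1) (y + 1) := Set.uIcc_subset_Icc ha hb
  have e : ∀ n : ℕ, n ≤ 3 → ∀ t ∈ Set.uIcc a b,
      iteratedDerivWithin n f (Set.uIcc a b) t = iteratedDeriv n f t := fun n hn t ht =>
    iteratedDerivWithin_eq_iteratedDeriv hu
      ((hf.of_le (by exact_mod_cast hn)).contDiffAt) ht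
  have hd : DifferentiableOn ℝ (iteratedDerivWithin 2 f (Set.uIcc a b)) (Set.uIoo a b) := by
    have h2 : Differentiable ℝ (iteratedDeriv 2 f) :=
      hf.differentiable_iteratedDeriv 2 (by norm_num)
    exact h2.differentiableOn.congr (fun t ht => e 2 (by norm_num) t (Set.uIoo_subset_uIcc_self ht))
  obtain ⟨c, hc', h⟩ := taylor_mean_remainder_lagrange (n := 2) hab
    ((hf.of_le (by norm_num)).contDiffOn) hd
  have hcm := Set.uIoo_subset_uIcc_self hc'
  rw [taylor_within_apply, e 3 le_rfl c hcm] at h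
  simp only [Finset.sum_range_succ, Finset.sum_range_zero, e 0 (by norm_num) a Set.left_mem_uIcc,
    e 1 (by norm_num) a Set.left_mem_uIcc, e 2 (by norm_num) a Set.left_mem_uIcc,
    iteratedDeriv_zero, iteratedDeriv_one, smul_eq_mul] at h
  norm_num [Nat.factorial] at h
  have h' : f b - (f a + deriv f a * (b - a) + (1 / 2) * iteratedDeriv 2 f a * (b - a) ^ 2)
      = iteratedDeriv 3 f c * (b - a) ^ 3 / 6 := by rw [← h]; ring
  rw [h', abs_div, abs_mul, abs_pow]
  have hb1 := (hM c (hsub hcm)).trans (le_abs_self M)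
  rw [Real.norm_eq_abs] at hb1
  have hp : 0 ≤ |b - a| ^ 3 := by positivity
  have := mul_le_mul_of_nonneg_right hb1 hp
  have h0 : 0 ≤ |iteratedDeriv 3 f c| * |b - a| ^ 3 := by positivity
  rw [abs_of_pos (by norm_num : (0:ℝ) < 6)]
  linarith

/-- First-order accuracy of the KFBI vertical correction at an interior
irregular node: the corrected truncation error is `O(h)`. -/
theorem kfbi_vertical_correction_interior_first_order
    (vp vm : ℝ × ℝ → ℝ) (hvp : ContDiff ℝ 3 vp) (hvm : ContDiff ℝ 3 vm)
    (x y : ℝ) :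
    ∃ C > 0, ∃ δ > 0, ∀ h : ℝ, 0 < h → h < δ →
      ∀ η : ℝ, η ∈ Set.Icc (y - h) y →
      |((vm (x, y + h) + vp (x, y - h) - 2 * vm (x, y)) / h ^ 2
            - iteratedDeriv 2 (fun t => vm (x, t)) y)
        - ((1 / h ^ 2) *
            ((vp (x, η) - vm (x, η))
              + (deriv (fun t => vp (x, t)) η - deriv (fun t => vm (x, t)) η) * (y - h - η)
              + (1 / 2) *
                  (iteratedDeriv 2 (fun t => vp (x, t)) η
                    - iteratedDeriv 2 (fun t => vm (x, t)) η) * (y - h - η) ^ 2))|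
        ≤ C * h := by
  obtain ⟨P, hP0, hP⟩ := kfbi_taylor (fun t => vp (x, t)) (by fun_prop) y
  obtain ⟨M, hM0, hM⟩ := kfbi_taylor (fun t => vm (x, t)) (by fun_prop) y
  refine ⟨P + 3 * M + 1, by positivity, 1, one_pos, fun h h0 h1 η hη => ?_⟩
  obtain ⟨hη1, hη2⟩ := hη
  have m0 : y ∈ Set.Icc (y - 1) (y + 1) := ⟨by linarith, by linarith⟩
  have mp : y + h ∈ Set.Icc (y - 1) (y + 1) := ⟨by linarith, by linarith⟩
  have mm : y - h ∈ Set.Icc (y - 1) (y + 1) := ⟨by linarith, by linarith⟩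
  have me : η ∈ Set.Icc (y - 1) (y + 1) := ⟨by linarith, by linarith⟩
  have b1 := hP η me (y - h) mm
  have b2 := hM η me (y - h) mm
  have b3 := hM y m0 (y + h) mp
  have b4 := hM y m0 (y - h) mm
  have hle : |y - h - η| ^ 3 ≤ h ^ 3 := by
    apply pow_le_pow_left₀ (abs_nonneg _)
    rw [abs_le]; constructor <;> linarith
  have hh : |y + h - y| = h := by rw [add_sub_cancel_left, abs_of_pos h0]
  have hh' : |y - h - y| = h := by rw [show y - h - y = -h by ring, abs_neg, abs_of_pos h0]
  rw [hh] at b3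
  rw [hh'] at b4
  replace b1 := b1.trans (mul_le_mul_of_nonneg_left hle hP0)
  replace b2 := b2.trans (mul_le_mul_of_nonneg_left hle hM0)
  generalize deriv (fun t => vp (x, t)) η = p1 at *
  generalize deriv (fun t => vm (x, t)) η = q1 at *
  generalize deriv (fun t => vm (x, t)) y = r1 at *
  generalize iteratedDeriv 2 (fun t => vp (x, t)) η = p2 at *
  generalize iteratedDeriv 2 (fun t => vm (x, t)) η = q2 at *
  generalize iteratedDeriv 2 (fun t => vm (x, t)) y = r2 at *
  have hpos : 0 < h ^ 2 := by positivity
  have h3 : 0 < h ^ 3 := by positivity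
  rw [abs_le] at b1 b2 b3 b4
  obtain ⟨b1, b1'⟩ := b1
  obtain ⟨b2, b2'⟩ := b2
  obtain ⟨b3, b3'⟩ := b3
  obtain ⟨b4, b4'⟩ := b4
  refine le_of_mul_le_mul_right ?_ hpos
  rw [← abs_of_pos hpos, ← abs_mul, abs_of_pos hpos]
  have key : ((vm (x, y + h) + vp (x, y - h) - 2 * vm (x, y)) / h ^ 2 - r2
      - ((1 / h ^ 2) * ((vp (x, η) - vm (x, η)) + (p1 - q1) * (y - h - η)
        + (1 / 2) * (p2 - q2) * (y - h - η) ^ 2))) * h ^ 2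
      = vm (x, y + h) + vp (x, y - h) - 2 * vm (x, y) - r2 * h ^ 2
      - ((vp (x, η) - vm (x, η)) + (p1 - q1) * (y - h - η)
        + (1 / 2) * (p2 - q2) * (y - h - η) ^ 2) := by
    field_simp
  rw [key, abs_le]
  constructor <;> nlinarith
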